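/- Let p be a prime and G a finite abelian group such that p is 2-small with respect to exp(G), and suppose k(G) = k*(G). Then for all positive integers m and n, k(C_{p^m} ⊕ C_{p^n} ⊕ G) = k*(C_{p^m} ⊕ C_{p^n} ⊕ G). -/

import Mathlib

/-- The cross number `k(S)` of a sequence (finite multiset) `S` over an additive group:
the sum, with multiplicity, of the reciprocals of the orders of its elements. -/
noncomputable def crossNum {G : Type*} [AddCommGroup G] (S : Multiset G) : ℝ :=
  (S.map fun g => ((addOrderOf g : ℝ))⁻¹).sum

/-- `S` is zero-sum free: no nonempty sub-multiset of `S` has sum `0`. -/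
def IsZeroSumFree {G : Type*} [AddCommGroup G] (S : Multiset G) : Prop :=
  ∀ T : Multiset G, T ≤ S → T ≠ 0 → T.sum ≠ 0

/-- The little cross number `k(G)`: the maximal cross number of a zero-sum free
sequence over `G`. -/
noncomputable def littleK (G : Type*) [AddCommGroup G] : ℝ :=
  sSup {x : ℝ | ∃ S : Multiset G, IsZeroSumFree S ∧ crossNum S = x}

/-- A prime `p` is 2-small with respect to `n` (written `p ≺² n`) if `p ∤ n` and
`(2p+2)/(2p+1) > ∑_{d ∣ n} 1/d`. -/
def TwoSmall (p n : ℕ) : Prop :=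
  ¬ p ∣ n ∧ ((2 * p + 2 : ℚ) / (2 * p + 1)) > ∑ d ∈ n.divisors, (1 : ℚ) / d

/-!
Olson's argument in the group algebra over `ZMod p` bounds zero-sum free sequences over a finite
abelian `p`-group `H`: a product of elements `1 - X^g` vanishes once its total weight is too large,
while its coefficient at `0` is `1` if the sequence is zero-sum free. This yields `k(H) ≤ k*(H)`.

Given a zero-sum free sequence over `H ⊕ G` with `H = C_{p^m} ⊕ C_{p^n}`, let `U` be the terms with
trivial `G`-component and `V` the others. If the subsequence sums of `U` exhaust `H`, then the
`G`-components of `V` form a zero-sum free sequence. Otherwise let `p^(c+1)` be the least order of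
an element of `H` that is not such a sum; appending its negative to `U` shows
`k(U) ≤ k*(H) - p^(-(c+1))`. For each order `d > 1`, the terms of `V` with that `G`-order are
grouped greedily into disjoint blocks whose `H`-components sum to a `p^c`-torsion element. Because
`H` has rank at most two, all blocks can be chosen of cross number at most `1` until less than
`3 / p^c` is left, so that the cross number in `H` is at most the number of blocks plus `2 / p^c`.
Every `p^c`-torsion element is a subsequence sum of `U`, so the `G`-sums of all the blocks form a
zero-sum free sequence over `G`. Hence `k(V) ≤ k(G) + (2 / p^c) ∑_{1 < d ∣ exp G} 1/d`, and
2-smallness says precisely that the last term is less than `(2 / p^c) / (2p + 1) < p^(-(c+1))`.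
-/

open Finset

section Families

variable {I G H : Type*} [AddCommGroup G] [AddCommGroup H]

/-- The sequence `(F i)_{i ∈ s}` is zero-sum free. Indexing a sequence by a finset instead of using
a multiset allows its terms to be grouped according to other data attached to the indices. -/
def IsZeroSumFreeOn (s : Finset I) (F : I → G) : Prop :=
  ∀ t ⊆ s, t.Nonempty → ∑ i ∈ t, F i ≠ 0

/-- The cross number of the sequence `(F i)_{i ∈ s}`. -/
noncomputable def crossNumOn (s : Finset I) (F : I → G) : ℝ :=
  ∑ i ∈ s, (addOrderOf (F i) : ℝ)⁻¹

/-- The set of all sums of subsequences of `(F i)_{i ∈ s}`, including the empty sum. -/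
def subsetSums (s : Finset I) (F : I → G) : Set G :=
  {g | ∃ t ⊆ s, ∑ i ∈ t, F i = g}

lemma crossNumOn_nonneg (s : Finset I) (F : I → G) : 0 ≤ crossNumOn s F :=
  sum_nonneg fun _ _ => by positivity

lemma crossNumOn_sdiff_add [DecidableEq I] {s t : Finset I} (hts : t ⊆ s) (F : I → G) :
    crossNumOn (s \ t) F + crossNumOn t F = crossNumOn s F :=
  sum_sdiff hts

lemma crossNum_map_val (s : Finset I) (F : I → G) :
    crossNum (s.val.map F) = crossNumOn s F := by
  rw [crossNum, Multiset.map_map]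
  rfl

lemma exists_le_map_eq_of_le_map {α β : Type*} {f : α → β} {S : Multiset α} {T : Multiset β}
    (hT : T ≤ S.map f) : ∃ S' ≤ S, S'.map f = T := by
  obtain ⟨U, hU⟩ := Multiset.le_iff_exists_add.1 hT
  rw [← Multiset.rel_eq, Multiset.rel_map_left, Multiset.rel_add_right] at hU
  obtain ⟨S', S'', hS', -, rfl⟩ := hU
  exact ⟨S', Multiset.le_add_right _ _, Multiset.rel_eq.1 (Multiset.rel_map_left.2 hS')⟩

lemma isZeroSumFree_map_val_iff {s : Finset I} {F : I → G} :
    IsZeroSumFree (s.val.map F) ↔ IsZeroSumFreeOn s F := by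
  constructor
  · intro hF t hts ht
    exact hF (t.val.map F) (Multiset.map_le_map (val_le_iff.2 hts)) (by simpa using ht.ne_empty)
  · intro hF T hT hT0
    obtain ⟨S, hS, rfl⟩ := exists_le_map_eq_of_le_map hT
    refine hF ⟨S, Multiset.nodup_of_le hS s.nodup⟩ (val_le_iff.1 hS) ?_
    rw [nonempty_iff_ne_empty, Ne, ← val_eq_zero]
    rintro rfl
    exact hT0 (Multiset.map_zero F)

lemma not_isZeroSumFreeOn_iff {s : Finset I} {F : I → G} :
    ¬ IsZeroSumFreeOn s F ↔ ∃ t ⊆ s, t.Nonempty ∧ ∑ i ∈ t, F i = 0 := by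
  simp only [IsZeroSumFreeOn, not_forall, not_not, exists_prop]

namespace IsZeroSumFreeOn

lemma map_injective {s : Finset I} {F : I → G} (hF : IsZeroSumFreeOn s F) (f : G →+ H)
    (hf : Function.Injective f) : IsZeroSumFreeOn s (f ∘ F) := by
  intro t hts ht hsum
  apply hF t hts ht
  apply hf
  rw [map_sum, map_zero]
  exact hsum

lemma insertNone {s : Finset I} {F : I → G} (hF : IsZeroSumFreeOn s F) {g : G}
    (hg : g ∉ subsetSums s F) :
    IsZeroSumFreeOn (Finset.insertNone s) (fun o : Option I => o.elim (-g) F) := by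
  classical
  intro t hts ht hsum
  have hsub : eraseNone t ⊆ s := fun i hi => some_mem_insertNone.1 (hts (mem_eraseNone.1 hi))
  by_cases hnone : none ∈ t
  · have ht_eq : t = Finset.insertNone (eraseNone t) := by
      rw [insertNone_eraseNone, insert_eq_of_mem hnone]
    rw [ht_eq, sum_insertNone] at hsum
    exact hg ⟨eraseNone t, hsub, (neg_add_eq_zero.1 hsum).symm⟩
  · have ht_eq : t = (eraseNone t).map Function.Embedding.some := by
      rw [map_some_eraseNone, erase_eq_of_notMem hnone]
    rw [ht_eq] at ht hsum
    rw [sum_map] at hsum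
    exact hF (eraseNone t) hsub (map_nonempty.1 ht) hsum

lemma prod {J : Type*} {s : Finset I} {F : I → G} {t : Finset J} {F' : J → H}
    (hF : IsZeroSumFreeOn s F) (hF' : IsZeroSumFreeOn t F') :
    IsZeroSumFreeOn (s.disjSum t)
      (Sum.elim (fun i => (F i, (0 : H))) fun j => ((0 : G), F' j)) := by
  intro u hu hne hsum
  obtain ⟨hus, hut⟩ := subset_disjSum.1 hu
  rw [← toLeft_disjSum_toRight (u := u)] at hsum
  simp only [sum_disjSum, Sum.elim_inl, Sum.elim_inr, Prod.ext_iff, Prod.fst_add, Prod.snd_add,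
    Prod.fst_sum, Prod.snd_sum, sum_const_zero, add_zero, zero_add, Prod.fst_zero,
    Prod.snd_zero] at hsum
  rcases hne with ⟨i | j, hmem⟩
  · exact hF _ hus ⟨i, mem_toLeft.2 hmem⟩ hsum.1
  · exact hF' _ hut ⟨j, mem_toRight.2 hmem⟩ hsum.2

end IsZeroSumFreeOn

end Families

section LittleCrossNumber

variable {G H : Type*} [AddCommGroup G] [AddCommGroup H]

lemma IsZeroSumFree.count_le_addOrderOf [DecidableEq G] [Finite G] {S : Multiset G}
    (hS : IsZeroSumFree S) (g : G) : S.count g ≤ addOrderOf g := by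
  by_contra! hlt
  apply hS _ (Multiset.le_count_iff_replicate_le.1 hlt.le)
  · rw [Ne, ← Multiset.card_eq_zero, Multiset.card_replicate]
    exact (addOrderOf_pos g).ne'
  · rw [Multiset.sum_replicate, addOrderOf_nsmul_eq_zero]

lemma bddAbove_crossNum_isZeroSumFree (G : Type*) [AddCommGroup G] [Finite G] :
    BddAbove {x : ℝ | ∃ S : Multiset G, IsZeroSumFree S ∧ crossNum S = x} := by
  classical
  have := Fintype.ofFinite G
  refine ⟨Fintype.card G, ?_⟩
  rintro _ ⟨S, hS, rfl⟩
  calc crossNum S = ∑ g ∈ S.toFinset, (S.count g : ℝ) * (addOrderOf g : ℝ)⁻¹ := by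
        simp only [crossNum, sum_multiset_map_count, nsmul_eq_mul]
    _ ≤ ∑ _ ∈ S.toFinset, (1 : ℝ) := sum_le_sum fun g _ => by
        rw [← div_eq_mul_inv]
        exact div_le_one_of_le₀ (mod_cast hS.count_le_addOrderOf g) (Nat.cast_nonneg _)
    _ ≤ Fintype.card G := by
        rw [sum_const, nsmul_one]
        exact_mod_cast card_le_univ _

lemma IsZeroSumFree.crossNum_le_littleK [Finite G] {S : Multiset G} (hS : IsZeroSumFree S) :
    crossNum S ≤ littleK G :=
  le_csSup (bddAbove_crossNum_isZeroSumFree G) ⟨S, hS, rfl⟩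

lemma IsZeroSumFreeOn.crossNumOn_le_littleK {I : Type*} [Finite G] {s : Finset I} {F : I → G}
    (hF : IsZeroSumFreeOn s F) : crossNumOn s F ≤ littleK G := by
  rw [← crossNum_map_val]
  exact (isZeroSumFree_map_val_iff.2 hF).crossNum_le_littleK

lemma littleK_le {C : ℝ}
    (hC : ∀ (n : ℕ) (F : Fin n → G), IsZeroSumFreeOn univ F → crossNumOn univ F ≤ C) :
    littleK G ≤ C := by
  refine csSup_le ⟨_, 0, fun T hT hT0 => absurd (Multiset.le_zero.1 hT) hT0, rfl⟩ ?_
  rintro _ ⟨S, hS, rfl⟩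
  obtain ⟨l, rfl⟩ := Quot.exists_rep S
  have hl : (univ : Finset (Fin l.length)).val.map l.get = Quot.mk _ l := by
    rw [Fin.univ_val_map, List.ofFn_get]
    rfl
  rw [← hl, isZeroSumFree_map_val_iff] at hS
  rw [← hl, crossNum_map_val]
  exact hC _ _ hS

lemma littleK_le_of_injective [Finite H] (f : G →+ H) (hf : Function.Injective f) :
    littleK G ≤ littleK H := by
  refine littleK_le fun n F hF => ?_
  have hcross : crossNumOn univ (f ∘ F) = crossNumOn univ F := by
    simp only [crossNumOn, Function.comp_apply, addOrderOf_injective f hf]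
  rw [← hcross]
  exact (hF.map_injective f hf).crossNumOn_le_littleK

lemma littleK_add_littleK_le_littleK_prod [Finite G] [Finite H] :
    littleK G + littleK H ≤ littleK (G × H) := by
  rw [← le_sub_iff_add_le]
  refine littleK_le fun n F hF => ?_
  rw [le_sub_comm]
  refine littleK_le fun n' F' hF' => ?_
  rw [le_sub_iff_add_le']
  refine le_trans (le_of_eq ?_) (hF.prod hF').crossNumOn_le_littleK
  simp [crossNumOn, Prod.addOrderOf]

lemma one_sub_inv_le_littleK_zmod (q : ℕ) [NeZero q] : 1 - (q : ℝ)⁻¹ ≤ littleK (ZMod q) := by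
  have hfree : IsZeroSumFreeOn (range (q - 1)) fun _ => (1 : ZMod q) := by
    intro t hts ht hsum
    rw [sum_const, nsmul_one, ZMod.natCast_eq_zero_iff] at hsum
    have hq := NeZero.pos q
    have hle := card_le_card hts
    rw [card_range] at hle
    have := Nat.le_of_dvd (card_pos.2 ht) hsum
    omega
  refine le_trans (le_of_eq ?_) hfree.crossNumOn_le_littleK
  rw [crossNumOn, sum_const, card_range, ZMod.addOrderOf_one, nsmul_eq_mul,
    Nat.cast_pred (NeZero.pos q), sub_mul, one_mul, mul_inv_cancel₀ (NeZero.ne (q : ℝ))]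

end LittleCrossNumber

section WeightedIdeal

variable {R ι I : Type*} [CommSemiring R] [Fintype ι] {y : ι → R} {q : ι → ℕ}

/-- The ideal generated by the monomials of weight at least `w` in the `y k`, where `y k` has
weight `q k`. It plays the role of the powers of the augmentation ideal in Olson's argument. -/
def weightedIdeal (y : ι → R) (q : ι → ℕ) (w : ℕ) : Ideal R :=
  Ideal.span {z | ∃ c : ι → ℕ, w ≤ ∑ k, c k * q k ∧ ∏ k, y k ^ c k = z}

lemma mul_mem_weightedIdeal {w w' : ℕ} {a b : R} (ha : a ∈ weightedIdeal y q w)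
    (hb : b ∈ weightedIdeal y q w') : a * b ∈ weightedIdeal y q (w + w') := by
  have hle : weightedIdeal y q w * weightedIdeal y q w' ≤ weightedIdeal y q (w + w') := by
    rw [weightedIdeal, weightedIdeal, Ideal.span_mul_span', Ideal.span_le]
    rintro _ ⟨_, ⟨c, hc, rfl⟩, _, ⟨c', hc', rfl⟩, rfl⟩
    refine Ideal.subset_span ⟨c + c', ?_, ?_⟩
    · simpa only [Pi.add_apply, add_mul, sum_add_distrib] using add_le_add hc hc'
    · simp only [Pi.add_apply, pow_add, prod_mul_distrib]
  exact hle (Ideal.mul_mem_mul ha hb)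

lemma prod_mem_weightedIdeal {s : Finset I} {f : I → R} {w : I → ℕ}
    (hf : ∀ i ∈ s, f i ∈ weightedIdeal y q (w i)) :
    ∏ i ∈ s, f i ∈ weightedIdeal y q (∑ i ∈ s, w i) := by
  classical
  induction s using Finset.induction_on with
  | empty => exact Ideal.subset_span ⟨0, by simp, by simp⟩
  | insert i s hi ih =>
    rw [prod_insert hi, sum_insert hi]
    exact mul_mem_weightedIdeal (hf i (mem_insert_self _ _))
      (ih fun j hj => hf j (mem_insert_of_mem hj))

lemma pow_mem_weightedIdeal {k : ι} {n w : ℕ} (hw : w ≤ n * q k) :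
    y k ^ n ∈ weightedIdeal y q w := by
  classical
  refine Ideal.subset_span ⟨Pi.single k n, ?_, ?_⟩
  · simpa [Pi.single_apply] using hw
  · simp [Pi.single_apply, pow_ite]

lemma weightedIdeal_eq_bot {r : ι → ℕ} (hy : ∀ k, y k ^ r k = 0) {w : ℕ}
    (hw : ∑ k, (r k - 1) * q k < w) : weightedIdeal y q w = ⊥ := by
  rw [weightedIdeal, Ideal.span_eq_bot]
  rintro _ ⟨c, hc, rfl⟩
  obtain ⟨k, -, hk⟩ := exists_lt_of_sum_lt (hw.trans_le hc)
  have hrk : r k ≤ c k := by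
    have := lt_of_mul_lt_mul_right' hk
    omega
  exact prod_eq_zero (mem_univ k) (pow_eq_zero_of_le hrk (hy k))

end WeightedIdeal

section GroupAlgebra

open AddMonoidAlgebra

lemma one_sub_prod_mem {R ι : Type*} [CommRing R] {J : Ideal R} {s : Finset ι} {z : ι → R}
    (hz : ∀ k ∈ s, 1 - z k ∈ J) : 1 - ∏ k ∈ s, z k ∈ J := by
  rw [← Ideal.Quotient.mk_eq_mk_iff_sub_mem, map_one, map_prod, eq_comm]
  refine prod_eq_one fun k hk => ?_
  rw [eq_comm, ← map_one (Ideal.Quotient.mk J), Ideal.Quotient.mk_eq_mk_iff_sub_mem]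
  exact hz k hk

lemma IsZeroSumFreeOn.prod_one_sub_single_ne_zero {I H : Type*} [AddCommGroup H] (R : Type*)
    [CommRing R] [Nontrivial R] {s : Finset I} {F : I → H} (hF : IsZeroSumFreeOn s F) :
    ∏ i ∈ s, (1 - single (F i) (1 : R)) ≠ 0 := by
  have hcoeff : (∏ i ∈ s, (1 - single (F i) (1 : R))).coeff 0 = 1 := by
    simp only [sub_eq_add_neg, ← single_neg, prod_one_add, prod_single, coeff_sum, coeff_single,
      Finsupp.coe_finsetSum, Finset.sum_apply]
    rw [sum_eq_single_of_mem ∅ (empty_mem_powerset s)]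
    · simp
    · intro t ht ht0
      exact Finsupp.single_eq_of_ne'
        (hF t (mem_powerset.1 ht) (nonempty_iff_ne_empty.2 ht0))
  intro hzero
  rw [hzero] at hcoeff
  exact zero_ne_one hcoeff

variable {p : ℕ} [Fact p.Prime] {R : Type*} [CommRing R] [CharP R p] {H : Type*} [AddCommGroup H]

lemma one_sub_single_pow_char_pow (g : H) (n : ℕ) :
    (1 - single g (1 : R)) ^ p ^ n = 1 - single (p ^ n • g) 1 := by
  have : CharP (AddMonoidAlgebra R H) p :=
    charP_of_injective_algebraMap (FaithfulSMul.algebraMap_injective R (AddMonoidAlgebra R H)) p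
  rw [sub_pow_char_pow, one_pow, single_pow, one_pow]

lemma one_sub_single_pow_dvd {n c : ℕ} (g : H) (hc : p ^ n ∣ c) :
    (1 - single g (1 : R)) ^ p ^ n ∣ 1 - single (c • g) 1 := by
  obtain ⟨c, rfl⟩ := hc
  have hpow : single ((p ^ n * c) • g) (1 : R) = single (p ^ n • g) 1 ^ c := by
    rw [single_pow, one_pow, mul_nsmul]
  rw [one_sub_single_pow_char_pow, hpow]
  exact one_sub_dvd_one_sub_pow _ _

end GroupAlgebra

section PrimaryGroup

open AddMonoidAlgebra

variable {p : ℕ} {ι I : Type*} {m : ι → ℕ}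

/-- The finite abelian `p`-group `⨁ k, C_{p^(m k)}`. Vanishing exponents `m k = 0` are allowed, so
the cardinality of the index type is only an upper bound for the rank. -/
abbrev PrimaryGroup (p : ℕ) {ι : Type*} (m : ι → ℕ) : Type _ := ∀ k, ZMod (p ^ m k)

/-- The value of `k*` at `PrimaryGroup p m`. -/
noncomputable def primaryKStar [Fintype ι] (p : ℕ) (m : ι → ℕ) : ℝ :=
  ∑ k, (1 - ((p : ℝ) ^ m k)⁻¹)

/-- The element `(1 - X^e)^(p^(m k - a))` of the group algebra, where `e` is the `k`-th standard
generator. In characteristic `p` it equals `1 - X^(p^(m k - a) e)`, and the group elements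
`p^(m k - a) e` generate the `p^a`-torsion subgroup. -/
noncomputable def torsionGenerator [DecidableEq ι] (p : ℕ) (m : ι → ℕ) (a : ℕ) (k : ι) :
    AddMonoidAlgebra (ZMod p) (PrimaryGroup p m) :=
  (1 - single (Pi.single k 1) 1) ^ p ^ (m k - a)

lemma pow_sum_nsmul_eq_zero [Fintype ι] (g : PrimaryGroup p m) : p ^ (∑ k, m k) • g = 0 := by
  ext k
  obtain ⟨c, hc⟩ : p ^ m k ∣ p ^ ∑ k, m k :=
    pow_dvd_pow p (single_le_sum (fun _ _ => Nat.zero_le _) (mem_univ k))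
  rw [Pi.smul_apply, hc, mul_comm, mul_nsmul', Pi.zero_apply]
  simp

lemma addOrderOf_dvd_pow_sum [Fintype ι] (g : PrimaryGroup p m) : addOrderOf g ∣ p ^ ∑ k, m k :=
  addOrderOf_dvd_of_nsmul_eq_zero (pow_sum_nsmul_eq_zero g)

variable [hp : Fact p.Prime]

lemma pow_dvd_val_of_nsmul_eq_zero {a b : ℕ} {z : ZMod (p ^ a)} (hz : p ^ b • z = 0) :
    p ^ (a - b) ∣ z.val := by
  obtain hab | hba := le_total a b
  · simp [Nat.sub_eq_zero_of_le hab]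
  · rw [← ZMod.natCast_zmod_val z, nsmul_eq_mul, ← Nat.cast_mul, ZMod.natCast_eq_zero_iff] at hz
    apply Nat.dvd_of_mul_dvd_mul_left (pow_pos hp.out.pos b)
    rwa [← pow_add, Nat.add_sub_of_le hba]

lemma exists_addOrderOf_eq_pow_of_nsmul_eq_zero {H : Type*} [AddCommGroup H] {a : ℕ} {g : H}
    (hg : p ^ a • g = 0) : ∃ b ≤ a, addOrderOf g = p ^ b :=
  (Nat.dvd_prime_pow hp.out).1 (addOrderOf_dvd_of_nsmul_eq_zero hg)

lemma torsionGenerator_pow_eq_zero [DecidableEq ι] (a : ℕ) (k : ι) :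
    torsionGenerator p m a k ^ p ^ min (m k) a = 0 := by
  have hexp : m k - a + min (m k) a = m k := by omega
  rw [torsionGenerator, ← pow_mul, ← pow_add, hexp, one_sub_single_pow_char_pow, ← Pi.single_smul]
  simp [one_def]

variable [Fintype ι]

lemma sum_val_nsmul_single [DecidableEq ι] (g : PrimaryGroup p m) :
    ∑ k, (g k).val • Pi.single k (1 : ZMod (p ^ m k)) = g := by
  conv_rhs => rw [← univ_sum_single g]
  refine sum_congr rfl fun k _ => ?_
  rw [← Pi.single_smul, nsmul_one, ZMod.natCast_zmod_val]

lemma one_sub_single_mem_weightedIdeal [DecidableEq ι] {a b : ℕ} (hba : b ≤ a)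
    {g : PrimaryGroup p m} (hg : p ^ b • g = 0) :
    1 - single g 1 ∈
      weightedIdeal (torsionGenerator p m a) (fun k => p ^ (a - min (m k) a)) (p ^ (a - b)) := by
  have hprod : single g (1 : ZMod p) =
      ∏ k, single ((g k).val • Pi.single k (1 : ZMod (p ^ m k))) 1 := by
    rw [prod_single, sum_val_nsmul_single, prod_const_one]
  rw [hprod]
  refine one_sub_prod_mem fun k _ => ?_
  have hexp : m k - a + (m k - b - (m k - a)) = m k - b := by omega
  have hdvd : torsionGenerator p m a k ^ p ^ (m k - b - (m k - a)) ∣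
      1 - single ((g k).val • Pi.single k (1 : ZMod (p ^ m k))) 1 := by
    rw [torsionGenerator, ← pow_mul, ← pow_add, hexp]
    exact one_sub_single_pow_dvd _ (pow_dvd_val_of_nsmul_eq_zero (congrFun hg k))
  refine Ideal.mem_of_dvd _ hdvd (pow_mem_weightedIdeal ?_)
  rw [← pow_add]
  exact pow_le_pow_right₀ hp.out.one_le (by omega)

namespace IsZeroSumFreeOn

lemma sum_pow_sub_le {s : Finset I} {F : I → PrimaryGroup p m} (hF : IsZeroSumFreeOn s F) {a : ℕ}
    {b : I → ℕ} (hba : ∀ i ∈ s, b i ≤ a) (hb : ∀ i ∈ s, p ^ b i • F i = 0) :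
    ∑ i ∈ s, p ^ (a - b i) ≤ ∑ k, (p ^ min (m k) a - 1) * p ^ (a - min (m k) a) := by
  classical
  by_contra! hlt
  apply hF.prod_one_sub_single_ne_zero (ZMod p)
  rw [← Ideal.mem_bot, ← weightedIdeal_eq_bot (torsionGenerator_pow_eq_zero a) hlt]
  exact prod_mem_weightedIdeal fun i hi => one_sub_single_mem_weightedIdeal (hba i hi) (hb i hi)

lemma crossNumOn_le_primaryKStar_min {s : Finset I} {F : I → PrimaryGroup p m}
    (hF : IsZeroSumFreeOn s F) {a : ℕ} (ha : ∀ i ∈ s, p ^ a • F i = 0) :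
    crossNumOn s F ≤ primaryKStar p fun k => min (m k) a := by
  choose! b hba hb using fun i hi => exists_addOrderOf_eq_pow_of_nsmul_eq_zero (ha i hi)
  have hp0 : (0 : ℝ) < p := mod_cast hp.out.pos
  have hweight : ∑ i ∈ s, (p : ℝ) ^ (a - b i) ≤
      ∑ k, ((p : ℝ) ^ min (m k) a - 1) * (p : ℝ) ^ (a - min (m k) a) := by
    have hnat := hF.sum_pow_sub_le hba fun i hi => hb i hi ▸ addOrderOf_nsmul_eq_zero (F i)
    rw [← Nat.cast_le (α := ℝ)] at hnat
    simpa only [Nat.cast_sum, Nat.cast_mul, Nat.cast_pow,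
      Nat.cast_pred (pow_pos hp.out.pos _)] using hnat
  calc crossNumOn s F = (∑ i ∈ s, (p : ℝ) ^ (a - b i)) / (p : ℝ) ^ a := by
        rw [sum_div]
        refine sum_congr rfl fun i hi => ?_
        rw [hb i hi, pow_sub₀ _ hp0.ne' (hba i hi), Nat.cast_pow]
        field_simp
    _ ≤ (∑ k, ((p : ℝ) ^ min (m k) a - 1) * (p : ℝ) ^ (a - min (m k) a)) / (p : ℝ) ^ a := by
        gcongr
    _ = primaryKStar p fun k => min (m k) a := by
        rw [primaryKStar, sum_div]
        refine sum_congr rfl fun k _ => ?_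
        rw [pow_sub₀ _ hp0.ne' (min_le_right _ _)]
        field_simp

lemma crossNumOn_le_primaryKStar {s : Finset I} {F : I → PrimaryGroup p m}
    (hF : IsZeroSumFreeOn s F) : crossNumOn s F ≤ primaryKStar p m := by
  refine (hF.crossNumOn_le_primaryKStar_min fun i _ => pow_sum_nsmul_eq_zero (F i)).trans_eq ?_
  refine sum_congr rfl fun k _ => ?_
  have hk : m k ≤ ∑ k, m k := single_le_sum (fun _ _ => Nat.zero_le _) (mem_univ k)
  simp only [min_eq_left hk]

end IsZeroSumFreeOn

end PrimaryGroup

section ZeroSumSubsequences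

variable {p : ℕ} {ι I : Type*} [Fintype ι] {m : ι → ℕ}

/-- The element `(p^N / ord g, g)` of `C_{p^N} ⊕ PrimaryGroup p m` for `N = ∑ k, m k`. It has the
same order as `g`, and the first coordinate records the cross number, scaled by `p^N`. -/
noncomputable def orderLift (g : PrimaryGroup p m) :
    PrimaryGroup p fun o : Option ι => o.elim (∑ k, m k) m
  | none => ((p ^ (∑ k, m k) / addOrderOf g : ℕ) : ZMod (p ^ ∑ k, m k))
  | some k => g k

lemma addOrderOf_orderLift (g : PrimaryGroup p m) : addOrderOf (orderLift g) = addOrderOf g := by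
  refine addOrderOf_eq_addOrderOf_iff.2 fun n => ⟨fun h => ?_, fun h => ?_⟩
  · exact funext fun k => congrFun h (some k)
  · funext o
    cases o with
    | some k => exact congrFun h k
    | none =>
      change n • ((p ^ (∑ k, m k) / addOrderOf g : ℕ) : ZMod (p ^ ∑ k, m k)) = 0
      obtain ⟨c, rfl⟩ := addOrderOf_dvd_of_nsmul_eq_zero h
      rw [nsmul_eq_mul, ← Nat.cast_mul, ZMod.natCast_eq_zero_iff, mul_right_comm,
        Nat.mul_div_cancel' (addOrderOf_dvd_pow_sum g)]
      exact dvd_mul_right _ _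

lemma crossNumOn_orderLift (s : Finset I) (f : I → PrimaryGroup p m) :
    crossNumOn s (fun i => orderLift (f i)) = crossNumOn s f := by
  simp only [crossNumOn, addOrderOf_orderLift]

lemma sum_eq_zero_of_sum_orderLift_eq_zero {s : Finset I} {f : I → PrimaryGroup p m}
    (hf : ∑ i ∈ s, orderLift (f i) = 0) : ∑ i ∈ s, f i = 0 := by
  funext k
  have hk := congrFun hf (some k)
  rw [Finset.sum_apply] at hk ⊢
  exact hk

variable [hp : Fact p.Prime]

lemma primaryKStar_le_card_mul {a : ℕ} (hm : ∀ k, m k ≤ a) :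
    primaryKStar p m ≤ Fintype.card ι * (1 - ((p : ℝ) ^ a)⁻¹) := by
  have hp1 : (1 : ℝ) ≤ p := mod_cast hp.out.one_le
  rw [← nsmul_eq_mul]
  refine sum_le_card_nsmul _ _ _ fun k _ => ?_
  gcongr
  exact hm k

lemma primaryKStar_lt_card [Nonempty ι] : primaryKStar p m < Fintype.card ι := by
  have hp0 : (0 : ℝ) < p := mod_cast hp.out.pos
  calc primaryKStar p m ≤ Fintype.card ι * (1 - ((p : ℝ) ^ ∑ k, m k)⁻¹) :=
        primaryKStar_le_card_mul fun k => single_le_sum (fun _ _ => Nat.zero_le _) (mem_univ k)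
    _ < Fintype.card ι := mul_lt_of_lt_one_right (mod_cast Fintype.card_pos)
        (sub_lt_self _ (by positivity))

lemma exists_ssubset_sum_eq_zero {s : Finset I} {F : I → PrimaryGroup p m}
    (hcard : 2 ≤ Fintype.card ι) (hF : Fintype.card ι ≤ crossNumOn s F) :
    ∃ t ⊂ s, t.Nonempty ∧ ∑ i ∈ t, F i = 0 := by
  classical
  have hcard' : (2 : ℝ) ≤ Fintype.card ι := mod_cast hcard
  have hs : s.Nonempty := by
    rw [nonempty_iff_ne_empty]
    rintro rfl
    rw [crossNumOn, sum_empty] at hF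
    linarith
  obtain ⟨j, hj, hmax⟩ := exists_max_image s (fun i => addOrderOf (F i)) hs
  suffices h : ¬ IsZeroSumFreeOn (s.erase j) F by
    obtain ⟨t, ht, hne, hsum⟩ := not_isZeroSumFreeOn_iff.1 h
    exact ⟨t, ht.trans_ssubset (erase_ssubset hj), hne, hsum⟩
  intro hfree
  obtain ⟨a, -, ha⟩ := exists_addOrderOf_eq_pow_of_nsmul_eq_zero (pow_sum_nsmul_eq_zero (F j))
  have htors : ∀ i ∈ s.erase j, p ^ a • F i = 0 := by
    intro i hi
    obtain ⟨b, -, hb⟩ := exists_addOrderOf_eq_pow_of_nsmul_eq_zero (pow_sum_nsmul_eq_zero (F i))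
    have hle := hmax i (mem_of_mem_erase hi)
    rw [ha, hb, Nat.pow_le_pow_iff_right hp.out.one_lt] at hle
    rw [← addOrderOf_dvd_iff_nsmul_eq_zero, hb]
    exact pow_dvd_pow p hle
  have hbound := (hfree.crossNumOn_le_primaryKStar_min htors).trans
    (primaryKStar_le_card_mul fun k => min_le_right (m k) a)
  have hadd : crossNumOn s F = ((p : ℝ) ^ a)⁻¹ + crossNumOn (s.erase j) F := by
    rw [crossNumOn, ← add_sum_erase s _ hj, ha, Nat.cast_pow, crossNumOn]
  have hp0 : (0 : ℝ) < p := mod_cast hp.out.pos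
  have hpos : 0 < ((p : ℝ) ^ a)⁻¹ := by positivity
  -- With `r = card ι`, the bounds give `k(s) ≤ r - (r - 1) / p^a`.
  nlinarith

lemma exists_natCast_eq_crossNumOn {s : Finset I} {f : I → PrimaryGroup p m}
    (hf : ∑ i ∈ s, orderLift (f i) = 0) : ∃ z : ℕ, crossNumOn s f = z := by
  have hp0 : (0 : ℝ) < p := mod_cast hp.out.pos
  have hnone : ((∑ i ∈ s, p ^ (∑ k, m k) / addOrderOf (f i) : ℕ) : ZMod (p ^ ∑ k, m k)) = 0 := by
    have h := congrFun hf none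
    rw [Finset.sum_apply] at h
    rw [Nat.cast_sum]
    exact h
  obtain ⟨z, hz⟩ := (ZMod.natCast_eq_zero_iff _ _).1 hnone
  refine ⟨z, mul_left_cancel₀ (pow_pos hp0 (∑ k, m k)).ne' ?_⟩
  rw [crossNumOn, mul_sum, ← Nat.cast_pow, ← Nat.cast_mul, ← hz, Nat.cast_sum]
  refine sum_congr rfl fun i _ => ?_
  rw [Nat.cast_div_charZero (addOrderOf_dvd_pow_sum (f i)), div_eq_mul_inv]

lemma exists_sum_eq_zero_crossNumOn_eq_natCast [Nonempty ι] {s : Finset I}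
    {f : I → PrimaryGroup p m} (hf : Fintype.card ι + 1 ≤ crossNumOn s f) :
    ∃ t ⊆ s, t.Nonempty ∧ ∑ i ∈ t, f i = 0 ∧
      ∃ z : ℕ, z ≤ Fintype.card ι ∧ crossNumOn t f = z := by
  have hcard : Fintype.card (Option ι) = Fintype.card ι + 1 := Fintype.card_option
  have hnotfree : ¬ IsZeroSumFreeOn s fun i => orderLift (f i) := by
    intro hfree
    have hle := hfree.crossNumOn_le_primaryKStar
    have hlt := primaryKStar_lt_card (p := p) (m := fun o : Option ι => o.elim (∑ k, m k) m)
    rw [crossNumOn_orderLift] at hle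
    rw [hcard, Nat.cast_add_one] at hlt
    linarith
  obtain ⟨t₀, ht₀⟩ := not_isZeroSumFreeOn_iff.1 hnotfree
  obtain ⟨t, -, ⟨hts, hne, hsum⟩, hmin⟩ := exists_minimal_le_of_wellFoundedLT
    (fun t => t ⊆ s ∧ t.Nonempty ∧ ∑ i ∈ t, orderLift (f i) = 0) t₀ ht₀
  obtain ⟨z, hz⟩ := exists_natCast_eq_crossNumOn hsum
  refine ⟨t, hts, hne, sum_eq_zero_of_sum_orderLift_eq_zero hsum, z, ?_, hz⟩
  by_contra! hlt
  have htwo : 2 ≤ Fintype.card (Option ι) := hcard ▸ Nat.succ_le_succ Fintype.card_pos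
  have hcross : Fintype.card (Option ι) ≤ crossNumOn t fun i => orderLift (f i) := by
    rw [crossNumOn_orderLift, hz, hcard]
    exact_mod_cast hlt
  obtain ⟨u, hut, hune, husum⟩ := exists_ssubset_sum_eq_zero htwo hcross
  exact hut.not_subset (hmin ⟨hut.subset.trans hts, hune, husum⟩ hut.subset)

lemma exists_sum_eq_zero_crossNumOn_le_one (hι : Fintype.card ι = 2) {s : Finset I}
    {f : I → PrimaryGroup p m} (hf : 3 ≤ crossNumOn s f) :
    ∃ t ⊆ s, t.Nonempty ∧ ∑ i ∈ t, f i = 0 ∧ crossNumOn t f ≤ 1 := by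
  classical
  have : Nonempty ι := Fintype.card_pos_iff.1 (hι ▸ two_pos)
  obtain ⟨t, hts, hne, hsum, z, hz, htz⟩ := exists_sum_eq_zero_crossNumOn_eq_natCast
    (s := s) (f := f) (by rw [hι]; norm_num1; exact hf)
  obtain hz1 | rfl : z ≤ 1 ∨ z = 2 := by omega
  · exact ⟨t, hts, hne, hsum, by rw [htz]; exact_mod_cast hz1⟩
  obtain ⟨u, hut, hune, husum⟩ := exists_ssubset_sum_eq_zero hι.ge (by rw [htz, hι])
  obtain hu | hu := le_or_gt (crossNumOn u f) 1
  · exact ⟨u, hut.subset.trans hts, hune, husum, hu⟩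
  · -- The cross numbers of `u` and `t \ u` add up to `2`.
    refine ⟨t \ u, sdiff_subset.trans hts, sdiff_nonempty.2 hut.not_subset, ?_, ?_⟩
    · simpa only [husum, hsum, add_zero] using sum_sdiff (f := f) hut.subset
    · have hadd := crossNumOn_sdiff_add hut.subset f
      rw [htz, Nat.cast_ofNat] at hadd
      linarith

end ZeroSumSubsequences

section Packing

variable {I H G : Type*} [AddCommGroup H] [AddCommGroup G]

/-- `𝒯` is a family of pairwise disjoint nonempty subsets of `W` whose `h`-sums all lie in `K`. -/
structure IsPacking (K : AddSubgroup H) (h : I → H) (W : Finset I) (𝒯 : Finset (Finset I)) :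
    Prop where
  pairwiseDisjoint : (𝒯 : Set (Finset I)).PairwiseDisjoint id
  subset : ∀ T ∈ 𝒯, T ⊆ W
  nonempty : ∀ T ∈ 𝒯, T.Nonempty
  sum_mem : ∀ T ∈ 𝒯, ∑ i ∈ T, h i ∈ K

namespace IsPacking

variable {K : AddSubgroup H} {h : I → H} {W T : Finset I} {𝒯 : Finset (Finset I)}

lemma empty : IsPacking K h W ∅ := by
  constructor <;> simp

lemma insert [DecidableEq I] (h𝒯 : IsPacking K h (W \ T) 𝒯) (hTW : T ⊆ W) (hT : T.Nonempty)
    (hsum : ∑ i ∈ T, h i ∈ K) : IsPacking K h W (insert T 𝒯) where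
  pairwiseDisjoint := by
    rw [coe_insert]
    exact h𝒯.pairwiseDisjoint.insert fun T' hT' _ => disjoint_sdiff.mono_right (h𝒯.subset T' hT')
  subset := forall_mem_insert _ _ _ |>.2 ⟨hTW, fun T' hT' => (h𝒯.subset T' hT').trans sdiff_subset⟩
  nonempty := forall_mem_insert _ _ _ |>.2 ⟨hT, h𝒯.nonempty⟩
  sum_mem := forall_mem_insert _ _ _ |>.2 ⟨hsum, h𝒯.sum_mem⟩

lemma notMem_of_sdiff [DecidableEq I] (h𝒯 : IsPacking K h (W \ T) 𝒯) : T ∉ 𝒯 := by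
  intro hT
  obtain ⟨i, hi⟩ := h𝒯.nonempty T hT
  exact (mem_sdiff.1 (h𝒯.subset T hT hi)).2 hi

lemma disjoint {W' : Finset I} {𝒯' : Finset (Finset I)} (h𝒯 : IsPacking K h W 𝒯)
    (h𝒯' : IsPacking K h W' 𝒯') (hW : Disjoint W W') : Disjoint 𝒯 𝒯' := by
  rw [disjoint_left]
  intro T hT hT'
  exact (h𝒯.nonempty T hT).ne_empty
    (disjoint_self.1 (hW.mono (h𝒯.subset T hT) (h𝒯'.subset T hT')))

lemma biUnion [DecidableEq I] {D : Type*} {s : Finset D} {w : D → Finset I}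
    {𝒯 : D → Finset (Finset I)} (h𝒯 : ∀ d ∈ s, IsPacking K h (w d) (𝒯 d))
    (hdisj : (s : Set D).PairwiseDisjoint w) (hw : ∀ d ∈ s, w d ⊆ W) :
    IsPacking K h W (s.biUnion 𝒯) where
  pairwiseDisjoint := by
    rw [coe_biUnion]
    rintro T hT T' hT' hne
    simp only [Set.mem_iUnion, mem_coe] at hT hT'
    obtain ⟨d, hd, hT⟩ := hT
    obtain ⟨d', hd', hT'⟩ := hT'
    obtain rfl | hdd' := eq_or_ne d d'
    · exact (h𝒯 d hd).pairwiseDisjoint hT hT' hne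
    · exact (hdisj hd hd' hdd').mono ((h𝒯 d hd).subset T hT) ((h𝒯 d' hd').subset T' hT')
  subset := by
    intro T hT
    obtain ⟨d, hd, hT⟩ := mem_biUnion.1 hT
    exact ((h𝒯 d hd).subset T hT).trans (hw d hd)
  nonempty := by
    intro T hT
    obtain ⟨d, hd, hT⟩ := mem_biUnion.1 hT
    exact (h𝒯 d hd).nonempty T hT
  sum_mem := by
    intro T hT
    obtain ⟨d, hd, hT⟩ := mem_biUnion.1 hT
    exact (h𝒯 d hd).sum_mem T hT

end IsPacking

namespace IsZeroSumFreeOn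

variable [DecidableEq I] {U V : Finset I} {F : I → H × G}

lemma neg_sum_fst_notMem_subsetSums (hF : IsZeroSumFreeOn (U ∪ V) F) (hUV : Disjoint U V)
    (hU : ∀ i ∈ U, (F i).2 = 0) {t : Finset I} (htV : t ⊆ V) (ht : t.Nonempty)
    (hsnd : ∑ i ∈ t, (F i).2 = 0) : -∑ i ∈ t, (F i).1 ∉ subsetSums U fun i => (F i).1 := by
  rintro ⟨u, huU, husum⟩
  apply hF (u ∪ t) (union_subset_union huU htV) (ht.mono subset_union_right)
  rw [sum_union (hUV.mono huU htV), Prod.ext_iff]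
  simp only [Prod.fst_add, Prod.fst_sum, Prod.snd_add, Prod.snd_sum, husum, hsnd,
    neg_add_cancel, add_zero, Prod.fst_zero, Prod.snd_zero, true_and]
  exact sum_eq_zero fun i hi => hU i (huU hi)

lemma snd_of_subsetSums_eq_univ (hF : IsZeroSumFreeOn (U ∪ V) F) (hUV : Disjoint U V)
    (hU : ∀ i ∈ U, (F i).2 = 0) (huniv : subsetSums U (fun i => (F i).1) = Set.univ) :
    IsZeroSumFreeOn V fun i => (F i).2 := by
  intro t htV ht hsnd
  apply hF.neg_sum_fst_notMem_subsetSums hUV hU htV ht hsnd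
  rw [huniv]
  exact Set.mem_univ _

lemma sum_snd_of_isPacking (hF : IsZeroSumFreeOn (U ∪ V) F) (hUV : Disjoint U V)
    (hU : ∀ i ∈ U, (F i).2 = 0) {K : AddSubgroup H}
    (hK : (K : Set H) ⊆ subsetSums U fun i => (F i).1) {𝒯 : Finset (Finset I)}
    (h𝒯 : IsPacking K (fun i => (F i).1) V 𝒯) : IsZeroSumFreeOn 𝒯 fun T => ∑ i ∈ T, (F i).2 := by
  intro 𝒮 h𝒮 ⟨T, hT⟩ hsnd
  have hdisj : (𝒮 : Set (Finset I)).PairwiseDisjoint id := h𝒯.pairwiseDisjoint.subset h𝒮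
  refine hF.neg_sum_fst_notMem_subsetSums hUV hU (t := 𝒮.biUnion id) ?_ ?_ ?_ (hK ?_)
  · exact biUnion_subset.2 fun T hT => h𝒯.subset T (h𝒮 hT)
  · exact (h𝒯.nonempty T (h𝒮 hT)).mono (subset_biUnion_of_mem id hT)
  · rw [sum_biUnion hdisj]
    exact hsnd
  · rw [sum_biUnion hdisj]
    exact K.neg_mem (K.sum_mem fun T hT => h𝒯.sum_mem T (h𝒮 hT))

end IsZeroSumFreeOn

end Packing

section TorsionPacking

variable {p : ℕ} [hp : Fact p.Prime] {ι I : Type*} {m : ι → ℕ}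

lemma addOrderOf_eq_pow_mul [Finite ι] {c : ℕ} {g : PrimaryGroup p m} (hg : p ^ c • g ≠ 0) :
    addOrderOf g = p ^ c * addOrderOf (p ^ c • g) := by
  have := Fintype.ofFinite ι
  obtain ⟨b, -, hb⟩ := exists_addOrderOf_eq_pow_of_nsmul_eq_zero (pow_sum_nsmul_eq_zero g)
  have hcb : c ≤ b := by
    by_contra! hlt
    apply hg
    rw [← addOrderOf_dvd_iff_nsmul_eq_zero, hb]
    exact pow_dvd_pow p hlt.le
  have hdvd : p ^ c ∣ addOrderOf g := hb ▸ pow_dvd_pow p hcb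
  rw [addOrderOf_nsmul_of_dvd (pow_pos hp.out.pos c).ne' hdvd, Nat.mul_div_cancel' hdvd]

lemma crossNumOn_eq_inv_pow_mul [Finite ι] {c : ℕ} {s : Finset I} {h : I → PrimaryGroup p m}
    (hs : ∀ i ∈ s, p ^ c • h i ≠ 0) :
    crossNumOn s h = ((p : ℝ) ^ c)⁻¹ * crossNumOn s fun i => p ^ c • h i := by
  rw [crossNumOn, crossNumOn, mul_sum]
  refine sum_congr rfl fun i hi => ?_
  rw [addOrderOf_eq_pow_mul (hs i hi), Nat.cast_mul, Nat.cast_pow, mul_inv]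

variable [Fintype ι]

lemma exists_nsmul_sum_eq_zero (hι : Fintype.card ι = 2) {c : ℕ} {W : Finset I}
    {h : I → PrimaryGroup p m} (hW : 2 * ((p : ℝ) ^ c)⁻¹ ≤ crossNumOn W h) :
    ∃ T ⊆ W, T.Nonempty ∧ p ^ c • ∑ i ∈ T, h i = 0 := by
  by_cases htors : ∃ i ∈ W, p ^ c • h i = 0
  · obtain ⟨i, hi, hi0⟩ := htors
    exact ⟨{i}, singleton_subset_iff.2 hi, singleton_nonempty i, by rwa [sum_singleton]⟩
  push Not at htors
  have hp0 : (0 : ℝ) < p := mod_cast hp.out.pos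
  have : Nonempty ι := Fintype.card_pos_iff.1 (hι ▸ two_pos)
  rw [crossNumOn_eq_inv_pow_mul htors, mul_comm,
    mul_le_mul_iff_right₀ (inv_pos.2 (pow_pos hp0 c))] at hW
  simp only [smul_sum]
  refine not_isZeroSumFreeOn_iff.1 fun hfree => ?_
  have hlt := hfree.crossNumOn_le_primaryKStar.trans_lt primaryKStar_lt_card
  rw [hι, Nat.cast_ofNat] at hlt
  exact hlt.not_ge hW

lemma exists_nsmul_sum_eq_zero_crossNumOn_le_one (hι : Fintype.card ι = 2) {c : ℕ} {W : Finset I}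
    {h : I → PrimaryGroup p m} (hW : 3 * ((p : ℝ) ^ c)⁻¹ ≤ crossNumOn W h) :
    ∃ T ⊆ W, T.Nonempty ∧ p ^ c • ∑ i ∈ T, h i = 0 ∧ crossNumOn T h ≤ 1 := by
  by_cases htors : ∃ i ∈ W, p ^ c • h i = 0
  · obtain ⟨i, hi, hi0⟩ := htors
    refine ⟨{i}, singleton_subset_iff.2 hi, singleton_nonempty i, by rwa [sum_singleton], ?_⟩
    rw [crossNumOn, sum_singleton]
    exact Nat.cast_inv_le_one _
  push Not at htors
  have hp1 : (1 : ℝ) ≤ p := mod_cast hp.out.one_le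
  have hpos : 0 < ((p : ℝ) ^ c)⁻¹ := by positivity
  rw [crossNumOn_eq_inv_pow_mul htors, mul_comm, mul_le_mul_iff_right₀ hpos] at hW
  obtain ⟨T, hTW, hT, hsum, hcross⟩ := exists_sum_eq_zero_crossNumOn_le_one hι hW
  refine ⟨T, hTW, hT, by rwa [smul_sum], ?_⟩
  rw [crossNumOn_eq_inv_pow_mul fun i hi => htors i (hTW hi)]
  exact mul_le_one₀ (inv_le_one_of_one_le₀ (one_le_pow₀ hp1)) (crossNumOn_nonneg _ _) hcross

lemma exists_isPacking_crossNumOn_le (hι : Fintype.card ι = 2) (c : ℕ) (h : I → PrimaryGroup p m)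
    (W : Finset I) : ∃ 𝒯, IsPacking (nsmulAddMonoidHom (p ^ c)).ker h W 𝒯 ∧
      crossNumOn W h ≤ 2 * ((p : ℝ) ^ c)⁻¹ + #𝒯 := by
  classical
  induction W using Finset.strongInduction with
  | H W ih =>
  obtain hlt | hge := lt_or_ge (crossNumOn W h) (3 * ((p : ℝ) ^ c)⁻¹)
  · obtain hlt2 | hge2 := lt_or_ge (crossNumOn W h) (2 * ((p : ℝ) ^ c)⁻¹)
    · exact ⟨∅, IsPacking.empty, by simpa using hlt2.le⟩
    · obtain ⟨T, hTW, hT, hsum⟩ := exists_nsmul_sum_eq_zero hι hge2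
      refine ⟨_, IsPacking.empty.insert hTW hT hsum, ?_⟩
      have hp1 : (1 : ℝ) ≤ p := mod_cast hp.out.one_le
      have hq : ((p : ℝ) ^ c)⁻¹ ≤ 1 := inv_le_one_of_one_le₀ (one_le_pow₀ hp1)
      rw [insert_empty_eq, card_singleton, Nat.cast_one]
      linarith
  · obtain ⟨T, hTW, hT, hsum, hcross⟩ := exists_nsmul_sum_eq_zero_crossNumOn_le_one hι hge
    obtain ⟨𝒯, h𝒯, hle⟩ := ih (W \ T) (sdiff_ssubset hTW hT)
    refine ⟨_, h𝒯.insert hTW hT hsum, ?_⟩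
    rw [card_insert_of_notMem h𝒯.notMem_of_sdiff, Nat.cast_add_one, ← crossNumOn_sdiff_add hTW]
    linarith

lemma IsZeroSumFreeOn.subsetSums_eq_univ_or {U : Finset I} {h : I → PrimaryGroup p m}
    (hU : IsZeroSumFreeOn U h) : subsetSums U h = Set.univ ∨
      ∃ c : ℕ, crossNumOn U h + ((p : ℝ) ^ (c + 1))⁻¹ ≤ primaryKStar p m ∧
        ((nsmulAddMonoidHom (p ^ c) : PrimaryGroup p m →+ _).ker : Set _) ⊆ subsetSums U h := by
  classical
  rw [or_iff_not_imp_left]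
  intro hne
  obtain ⟨g₀, hg₀⟩ := (Set.ne_univ_iff_exists_notMem _).1 hne
  have hex : ∃ c : ℕ, ∃ g ∉ subsetSums U h, p ^ c • g = 0 :=
    ⟨_, g₀, hg₀, pow_sum_nsmul_eq_zero g₀⟩
  obtain ⟨g, hgU, hg⟩ := Nat.find_spec hex
  rcases hfind : Nat.find hex with _ | c
  · rw [hfind, pow_zero, one_nsmul] at hg
    exact absurd ⟨∅, empty_subset U, by rw [sum_empty, hg]⟩ hgU
  · rw [hfind] at hg
    have hmin : ∀ x, p ^ c • x = 0 → x ∈ subsetSums U h := by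
      intro x hx
      by_contra hxU
      exact Nat.find_min hex (hfind ▸ Nat.lt_succ_self c) ⟨x, hxU, hx⟩
    have hord : addOrderOf g = p ^ (c + 1) :=
      addOrderOf_eq_prime_pow (fun h0 => hgU (hmin g h0)) hg
    refine ⟨c, ?_, hmin⟩
    -- Since `g` is not a subsequence sum, `-g` can be appended to the zero-sum free sequence.
    have hbound := (hU.insertNone hgU).crossNumOn_le_primaryKStar
    rw [crossNumOn, sum_insertNone, add_comm] at hbound
    simpa only [crossNumOn, Option.elim, addOrderOf_neg, hord, Nat.cast_pow] using hbound

end TorsionPacking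

section PrimaryProduct

variable {I G : Type*} [AddCommGroup G]

lemma TwoSmall.two_mul_sum_inv_le {p n : ℕ} (h : TwoSmall p n) (hp : 0 < p) (hn : n ≠ 0) :
    2 * ∑ d ∈ n.divisors.erase 1, (d : ℝ)⁻¹ ≤ (p : ℝ)⁻¹ := by
  have hp' : (0 : ℚ) < p := mod_cast hp
  have hlt : ∑ d ∈ n.divisors.erase 1, (d : ℚ)⁻¹ < (2 * p + 1 : ℚ)⁻¹ := by
    have hsum := h.2
    rw [← add_sum_erase _ _ (Nat.one_mem_divisors.2 hn)] at hsum
    have hfrac : (2 * p + 2 : ℚ) / (2 * p + 1) = 1 + (2 * p + 1 : ℚ)⁻¹ := by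
      field_simp
      ring
    simp only [one_div, Nat.cast_one, inv_one, hfrac] at hsum
    linarith
  have hinv : 2 * (2 * p + 1 : ℚ)⁻¹ ≤ (p : ℚ)⁻¹ := by
    rw [← div_eq_mul_inv, inv_eq_one_div, div_le_div_iff₀ (by positivity) hp']
    linarith
  have hrat : 2 * ∑ d ∈ n.divisors.erase 1, (d : ℚ)⁻¹ ≤ (p : ℚ)⁻¹ := by linarith
  have hreal := (Rat.cast_le (K := ℝ)).2 hrat
  push_cast at hreal
  exact hreal

lemma addOrderOf_sum_dvd {T : Finset I} {x : I → G} {d : ℕ} (hT : ∀ i ∈ T, addOrderOf (x i) ∣ d) :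
    addOrderOf (∑ i ∈ T, x i) ∣ d := by
  rw [addOrderOf_dvd_iff_nsmul_eq_zero, smul_sum]
  exact sum_eq_zero fun i hi => addOrderOf_dvd_iff_nsmul_eq_zero.1 (hT i hi)

lemma crossNumOn_eq_crossNumOn_fst {H : Type*} [AddCommGroup H] {U : Finset I} {F : I → H × G}
    (hU : ∀ i ∈ U, (F i).2 = 0) : crossNumOn U F = crossNumOn U fun i => (F i).1 := by
  refine sum_congr rfl fun i hi => ?_
  rw [Prod.addOrderOf, hU i hi, addOrderOf_zero, Nat.lcm_one_right]

lemma IsZeroSumFreeOn.sum_card_mul_inv_le_littleK {H : Type*} [AddCommGroup H] [Finite G]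
    [DecidableEq I] {U V : Finset I} {F : I → H × G} (hF : IsZeroSumFreeOn (U ∪ V) F)
    (hUV : Disjoint U V) (hU : ∀ i ∈ U, (F i).2 = 0) {K : AddSubgroup H}
    (hK : (K : Set H) ⊆ subsetSums U fun i => (F i).1) {D : Finset ℕ} (hD : 0 ∉ D)
    {𝒯 : ℕ → Finset (Finset I)}
    (h𝒯 : ∀ d, IsPacking K (fun i => (F i).1) (V.filter fun i => addOrderOf (F i).2 = d) (𝒯 d)) :
    ∑ d ∈ D, #(𝒯 d) * (d : ℝ)⁻¹ ≤ littleK G := by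
  have hdisj : Pairwise fun d d' => Disjoint (V.filter fun i => addOrderOf (F i).2 = d)
      (V.filter fun i => addOrderOf (F i).2 = d') := fun d d' hdd' =>
    disjoint_filter.2 fun i _ hd hd' => hdd' (hd.symm.trans hd')
  have hpack : IsPacking K (fun i => (F i).1) V (D.biUnion 𝒯) :=
    IsPacking.biUnion (fun d _ => h𝒯 d) (hdisj.set_pairwise _) fun d _ => filter_subset _ V
  refine le_trans ?_ (hF.sum_snd_of_isPacking hUV hU hK hpack).crossNumOn_le_littleK
  rw [crossNumOn, sum_biUnion fun d _ d' _ hdd' => (h𝒯 d).disjoint (h𝒯 d') (hdisj hdd')]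
  refine sum_le_sum fun d hd => ?_
  rw [← nsmul_eq_mul]
  refine card_nsmul_le_sum _ _ _ fun T hT => ?_
  have hdvd : addOrderOf (∑ i ∈ T, (F i).2) ∣ d :=
    addOrderOf_sum_dvd fun i hi => (mem_filter.1 ((h𝒯 d).subset T hT hi)).2.dvd
  have hd0 : 0 < d := Nat.pos_of_ne_zero fun h0 => hD (h0 ▸ hd)
  exact inv_anti₀ (mod_cast addOrderOf_pos _) (mod_cast Nat.le_of_dvd hd0 hdvd)

variable {p : ℕ} {ι : Type*} {m : ι → ℕ}

lemma addOrderOf_eq_fst_mul_snd [Finite ι] (hp : p.Prime) (hpG : ¬ p ∣ AddMonoid.exponent G)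
    (x : PrimaryGroup p m × G) : addOrderOf x = addOrderOf x.1 * addOrderOf x.2 := by
  have := Fintype.ofFinite ι
  rw [Prod.addOrderOf]
  apply Nat.Coprime.lcm_eq_mul
  apply Nat.Coprime.coprime_dvd_left (addOrderOf_dvd_pow_sum x.1)
  apply Nat.Coprime.coprime_dvd_right (AddMonoid.addOrder_dvd_exponent x.2)
  exact Nat.Coprime.pow_left _ ((Nat.Prime.coprime_iff_not_dvd hp).2 hpG)

lemma crossNumOn_eq_sum_mul_inv [Finite ι] [Finite G] (hp : p.Prime)
    (hpG : ¬ p ∣ AddMonoid.exponent G) {V : Finset I} {F : I → PrimaryGroup p m × G}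
    (hV : ∀ i ∈ V, (F i).2 ≠ 0) :
    crossNumOn V F = ∑ d ∈ (AddMonoid.exponent G).divisors.erase 1,
      crossNumOn (V.filter fun i => addOrderOf (F i).2 = d) (fun i => (F i).1) * (d : ℝ)⁻¹ := by
  have hmaps : ∀ i ∈ V, addOrderOf (F i).2 ∈ (AddMonoid.exponent G).divisors.erase 1 := by
    intro i hi
    rw [mem_erase, Nat.mem_divisors, Ne, AddMonoid.addOrderOf_eq_one_iff]
    exact ⟨hV i hi, AddMonoid.addOrder_dvd_exponent _, AddMonoid.exponent_ne_zero_of_finite⟩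
  rw [crossNumOn, ← sum_fiberwise_of_maps_to hmaps]
  refine sum_congr rfl fun d _ => ?_
  rw [crossNumOn, sum_mul]
  refine sum_congr rfl fun i hi => ?_
  rw [addOrderOf_eq_fst_mul_snd hp hpG, (mem_filter.1 hi).2, Nat.cast_mul, mul_inv]

lemma crossNumOn_le_crossNumOn_snd [Finite ι] [Finite G] (hp : p.Prime)
    (hpG : ¬ p ∣ AddMonoid.exponent G) (V : Finset I) (F : I → PrimaryGroup p m × G) :
    crossNumOn V F ≤ crossNumOn V fun i => (F i).2 := by
  refine sum_le_sum fun i _ => ?_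
  rw [addOrderOf_eq_fst_mul_snd hp hpG, Nat.cast_mul, mul_inv]
  exact mul_le_of_le_one_left (by positivity) (Nat.cast_inv_le_one _)

variable [Fintype ι] [Finite G] [hp : Fact p.Prime]

lemma IsZeroSumFreeOn.crossNumOn_le_two_mul_inv_pow_mul_add_littleK [DecidableEq I]
    (hι : Fintype.card ι = 2) (hpG : ¬ p ∣ AddMonoid.exponent G) {U V : Finset I}
    {F : I → PrimaryGroup p m × G} (hF : IsZeroSumFreeOn (U ∪ V) F) (hUV : Disjoint U V)
    (hU : ∀ i ∈ U, (F i).2 = 0) (hV : ∀ i ∈ V, (F i).2 ≠ 0) {c : ℕ}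
    (hc : ((nsmulAddMonoidHom (p ^ c) : PrimaryGroup p m →+ _).ker : Set _) ⊆
      subsetSums U fun i => (F i).1) :
    crossNumOn V F ≤ ((p : ℝ) ^ c)⁻¹ *
      (2 * ∑ d ∈ (AddMonoid.exponent G).divisors.erase 1, (d : ℝ)⁻¹) + littleK G := by
  set D := (AddMonoid.exponent G).divisors.erase 1
  have hD : 0 ∉ D := fun h0 => (Nat.pos_of_mem_divisors (mem_of_mem_erase h0)).false
  choose 𝒯 h𝒯 hcross using fun d : ℕ => exists_isPacking_crossNumOn_le hι c (fun i => (F i).1)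
    (V.filter fun i => addOrderOf (F i).2 = d)
  calc crossNumOn V F
      ≤ ∑ d ∈ D, (2 * ((p : ℝ) ^ c)⁻¹ + #(𝒯 d)) * (d : ℝ)⁻¹ := by
        rw [crossNumOn_eq_sum_mul_inv hp.out hpG hV]
        exact sum_le_sum fun d _ => mul_le_mul_of_nonneg_right (hcross d) (by positivity)
    _ = ((p : ℝ) ^ c)⁻¹ * (2 * ∑ d ∈ D, (d : ℝ)⁻¹) + ∑ d ∈ D, #(𝒯 d) * (d : ℝ)⁻¹ := by
        simp only [add_mul, sum_add_distrib, mul_sum]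
        congr 1
        exact sum_congr rfl fun d _ => by ring
    _ ≤ _ := by
        gcongr
        exact hF.sum_card_mul_inv_le_littleK hUV hU hc hD h𝒯

lemma IsZeroSumFreeOn.crossNumOn_le_primaryKStar_add_littleK (hι : Fintype.card ι = 2)
    (h2 : TwoSmall p (AddMonoid.exponent G)) {s : Finset I} {F : I → PrimaryGroup p m × G}
    (hF : IsZeroSumFreeOn s F) : crossNumOn s F ≤ primaryKStar p m + littleK G := by
  classical
  set U := s.filter fun i => (F i).2 = 0
  set V := s.filter fun i => ¬ (F i).2 = 0
  have hU : ∀ i ∈ U, (F i).2 = 0 := fun i hi => (mem_filter.1 hi).2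
  have hV : ∀ i ∈ V, (F i).2 ≠ 0 := fun i hi => (mem_filter.1 hi).2
  have hUV : Disjoint U V := disjoint_filter_filter_not s s _
  have hs : s = U ∪ V := (filter_union_filter_not_eq _ s).symm
  rw [hs] at hF
  have hUfst : IsZeroSumFreeOn U fun i => (F i).1 := by
    intro t htU ht hsum
    refine hF t (htU.trans subset_union_left) ht (Prod.ext ?_ ?_)
    · rw [Prod.fst_sum, hsum, Prod.fst_zero]
    · rw [Prod.snd_sum, Prod.snd_zero]
      exact sum_eq_zero fun i hi => hU i (htU hi)
  have hsplit : crossNumOn s F = crossNumOn U (fun i => (F i).1) + crossNumOn V F := by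
    rw [hs, crossNumOn, sum_union hUV, ← crossNumOn_eq_crossNumOn_fst hU, crossNumOn, crossNumOn]
  rw [hsplit]
  obtain huniv | ⟨c, hUc, hc⟩ := hUfst.subsetSums_eq_univ_or
  · gcongr
    · exact hUfst.crossNumOn_le_primaryKStar
    · exact (crossNumOn_le_crossNumOn_snd hp.out h2.1 V F).trans
        (hF.snd_of_subsetSums_eq_univ hUV hU huniv).crossNumOn_le_littleK
  · have hVc := hF.crossNumOn_le_two_mul_inv_pow_mul_add_littleK hι h2.1 hUV hU hV hc
    have hsmall := mul_le_mul_of_nonneg_left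
      (h2.two_mul_sum_inv_le hp.out.pos AddMonoid.exponent_ne_zero_of_finite)
      (by positivity : (0 : ℝ) ≤ ((p : ℝ) ^ c)⁻¹)
    rw [← mul_inv, ← pow_succ] at hsmall
    linarith

end PrimaryProduct

section TwoCyclicFactors

variable {G : Type*} [AddCommGroup G] [Finite G] {p : ℕ} [hp : Fact p.Prime]

lemma littleK_zmod_pow_prod_le (h2 : TwoSmall p (AddMonoid.exponent G)) (m n : ℕ) :
    littleK (ZMod (p ^ m) × ZMod (p ^ n) × G) ≤
      (1 - ((p : ℝ) ^ m)⁻¹) + (1 - ((p : ℝ) ^ n)⁻¹) + littleK G := by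
  let e : ZMod (p ^ m) × ZMod (p ^ n) ≃+ PrimaryGroup p ![m, n] :=
    (RingEquiv.piFinTwo fun k => ZMod (p ^ ![m, n] k)).symm.toAddEquiv
  let f : ZMod (p ^ m) × ZMod (p ^ n) × G ≃+ PrimaryGroup p ![m, n] × G :=
    AddEquiv.prodAssoc.symm.trans (e.prodCongr (AddEquiv.refl G))
  have hkstar : primaryKStar p ![m, n] = (1 - ((p : ℝ) ^ m)⁻¹) + (1 - ((p : ℝ) ^ n)⁻¹) := by
    simp only [primaryKStar, Fin.sum_univ_two, Matrix.cons_val_zero, Matrix.cons_val_one]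
  rw [← hkstar]
  refine (littleK_le_of_injective f.toAddMonoidHom f.injective).trans (littleK_le fun k F hF => ?_)
  exact hF.crossNumOn_le_primaryKStar_add_littleK (Fintype.card_fin 2) h2

lemma le_littleK_zmod_prod (q r : ℕ) [NeZero q] [NeZero r] :
    (1 - (q : ℝ)⁻¹) + (1 - (r : ℝ)⁻¹) + littleK G ≤ littleK (ZMod q × ZMod r × G) := by
  calc (1 - (q : ℝ)⁻¹) + (1 - (r : ℝ)⁻¹) + littleK G
      = (1 - (q : ℝ)⁻¹) + ((1 - (r : ℝ)⁻¹) + littleK G) := add_assoc _ _ _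
    _ ≤ littleK (ZMod q) + (littleK (ZMod r) + littleK G) := by
        gcongr <;> exact one_sub_inv_le_littleK_zmod _
    _ ≤ littleK (ZMod q) + littleK (ZMod r × G) := by
        gcongr
        exact littleK_add_littleK_le_littleK_prod
    _ ≤ littleK (ZMod q × ZMod r × G) := littleK_add_littleK_le_littleK_prod

end TwoCyclicFactors

theorem littleK_eq_kStar_zmod_pow_prod_of_twoSmall_general
    (p : ℕ) (hp : p.Prime) (G : Type*) [AddCommGroup G] [Finite G]
    (h2 : TwoSmall p (AddMonoid.exponent G)) (m n : ℕ) :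
    littleK (ZMod (p ^ m) × ZMod (p ^ n) × G)
      = (1 - ((p : ℝ) ^ m)⁻¹) + (1 - ((p : ℝ) ^ n)⁻¹) + littleK G := by
  have : Fact p.Prime := ⟨hp⟩
  have hlower := le_littleK_zmod_prod (G := G) (p ^ m) (p ^ n)
  rw [Nat.cast_pow, Nat.cast_pow] at hlower
  exact (littleK_zmod_pow_prod_le h2 m n).antisymm hlower

/-- If `p` is a prime that is 2-small with respect to `exp(G)` and `k(G) = k*(G)`, then
`k(C_{p^m} ⊕ C_{p^n} ⊕ G) = k*(C_{p^m} ⊕ C_{p^n} ⊕ G)` for all positive `m, n`.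
Here `k*` is expressed via a decomposition of `G` into cyclic groups of prime-power
order `P i ^ A i`, so that `k*(G) = ∑ i, (1 - 1/(P i ^ A i))` and
`k*(C_{p^m} ⊕ C_{p^n} ⊕ G) = (1 - 1/p^m) + (1 - 1/p^n) + k*(G)`. -/
theorem littleK_eq_kStar_zmod_pow_prod_of_twoSmall
    (p : ℕ) (hp : p.Prime) (G : Type*) [AddCommGroup G] [Finite G]
    (h2 : TwoSmall p (AddMonoid.exponent G))
    (ι : Type*) [Fintype ι] (P A : ι → ℕ) (hP : ∀ i, (P i).Prime) (hA : ∀ i, 1 ≤ A i)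
    (e : G ≃+ (∀ i, ZMod (P i ^ A i)))
    (hG : littleK G = ∑ i, (1 - ((P i : ℝ) ^ A i)⁻¹))
    (m n : ℕ) (hm : 0 < m) (hn : 0 < n) :
    littleK (ZMod (p ^ m) × ZMod (p ^ n) × G)
      = (1 - ((p : ℝ) ^ m)⁻¹) + (1 - ((p : ℝ) ^ n)⁻¹)
          + ∑ i, (1 - ((P i : ℝ) ^ A i)⁻¹) := by
  rw [littleK_eq_kStar_zmod_pow_prod_of_twoSmall_general p hp G h2 m n, hG]
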